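/- If q is odd and (q+1)/2 ≤ k ≤ q-1, then the minimum Hamming distance of the puncture code P(C) of the [q^2+1, k, q^2+2-k]_{q^2} Reed-Solomon code C is at most (q+1)(k - (q-1)/2); that is, P(C) contains a nonzero codeword of weight (q+1)(k - (q-1)/2). -/

import Mathlib

open Polynomial

/-- The codeword of the (extended) `k`-dimensional Reed-Solomon code of length `q² + 1`
associated to a polynomial `f`: the evaluations of `f` at all elements of the field
(enumerated by `a`), followed by the coefficient of `X^(k-1)` in `f`. -/
def rsWord (q k : ℕ) {F : Type} [Field F] (a : Fin (q ^ 2) → F)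
    (f : Polynomial F) (i : Fin (q ^ 2 + 1)) : F :=
  if hi : (i : ℕ) < q ^ 2 then f.eval (a ⟨(i : ℕ), hi⟩) else f.coeff (k - 1)

/-- The puncture code `P(C)` of the `k`-dimensional Reed-Solomon code `C` of length `q² + 1`
over `F = 𝔽_{q²}`: all vectors `λ` with entries in the subfield `𝔽_q` (i.e. `λ_i^q = λ_i`)
such that `∑ λ_i u_i v_i^q = 0` for all codewords `u, v` of `C`. -/
def puncRS (q k : ℕ) {F : Type} [Field F] [Fintype F] (a : Fin (q ^ 2) → F) :
    Set (Fin (q ^ 2 + 1) → F) :=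
  {lam | (∀ i, lam i ^ q = lam i) ∧
    ∀ f g : Polynomial F, f.degree < (k : WithBot ℕ) → g.degree < (k : WithBot ℕ) →
      ∑ i, lam i * rsWord q k a f i * (rsWord q k a g i) ^ q = 0}

/-- The Hamming weight of a vector: the number of its nonzero coordinates. -/
noncomputable def wt {n : ℕ} {F : Type} [Zero F] (v : Fin n → F) : ℕ :=
  Set.ncard {i | v i ≠ 0}


lemma exists_frob (q : ℕ) (hq : IsPrimePow q) (F : Type) [Field F] [Fintype F]
    (hF : Fintype.card F = q ^ 2) : ∃ Fr : F →+* F, ∀ x, Fr x = x ^ q := by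
  obtain ⟨p, n, hp, hn, rfl⟩ := hq
  obtain ⟨p', hc, n', hp', hcard⟩ := FiniteField.card' F
  have hpp : p = p' := by
    have h1 : p ∣ p' ^ (n' : ℕ) := by
      rw [← hcard, hF, ← pow_mul]
      exact dvd_pow_self _ (by omega)
    exact (Nat.prime_dvd_prime_iff_eq hp.nat_prime hp').1 (hp.nat_prime.dvd_of_dvd_pow h1)
  subst hpp
  have : Fact p.Prime := ⟨hp'⟩
  exact ⟨iterateFrobenius F p n, fun x => iterateFrobenius_def _ _ _⟩

lemma exists_prim (q : ℕ) (hq : 2 ≤ q) (F : Type) [Field F] [Fintype F]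
    (hF : Fintype.card F = q ^ 2) : ∃ g : F, g ≠ 0 ∧ orderOf g = (q - 1) * (q + 1) := by
  classical
  obtain ⟨g, hg⟩ := IsCyclic.exists_generator (α := Fˣ)
  refine ⟨g, g.ne_zero, ?_⟩
  rw [orderOf_units, orderOf_eq_card_of_forall_mem_zpowers hg, Nat.card_eq_fintype_card,
    Fintype.card_units, hF]
  obtain ⟨r, rfl⟩ : ∃ r, q = r + 1 := ⟨q - 1, by omega⟩
  simp only [Nat.add_sub_cancel]
  have : (r + 1) ^ 2 = r * (r + 1 + 1) + 1 := by ring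
  omega

lemma exists_weights (F : Type) [Field F] (s : ℕ) (t : Fin s → F) (ht : Function.Injective t)
    (q : ℕ) (Fr : F →+* F) (hFr : ∀ x, Fr x = x ^ q) (htq : ∀ e, t e ^ q = t e) :
    ∃ w : Fin s → F, (∀ e, w e ≠ 0) ∧ (∀ e, w e ^ q = w e) ∧
      ∀ i, i + 1 < s → ∑ e, w e * t e ^ i = 0 := by
  classical
  refine ⟨fun e => (∏ j ∈ Finset.univ.erase e, (t e - t j))⁻¹, ?_, ?_, ?_⟩
  · intro e
    refine inv_ne_zero (Finset.prod_ne_zero_iff.2 fun j hj => sub_ne_zero.2 fun h => ?_)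
    exact (Finset.mem_erase.1 hj).1 (ht h).symm
  · intro e
    dsimp only
    rw [← hFr, map_inv₀, map_prod]
    congr 1
    refine Finset.prod_congr rfl fun j _ => ?_
    rw [map_sub, hFr, hFr, htq, htq]
  · intro i hi
    have := Lagrange.coeff_eq_sum (s := Finset.univ) (v := t) ht.injOn (P := (X : F[X]) ^ i)
      (by rw [degree_X_pow, Finset.card_univ, Fintype.card_fin]; exact_mod_cast (by omega))
    rw [Finset.card_univ, Fintype.card_fin, coeff_X_pow, if_neg (by omega)] at this
    rw [this]
    refine Finset.sum_congr rfl fun e _ => ?_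
    simp [div_eq_mul_inv, mul_comm]

/-- The key vanishing statement on monomials. Here `q = 2m+1`, `k = m+s`. -/
lemma key_sum (F : Type) [Field F] (m s : ℕ) (hsm : s ≤ m) (g : F) (hg0 : g ≠ 0)
    (hg : orderOf g = (2 * m) * (2 * m + 2)) (hγ : (g ^ (2 * m + 2)) ^ (2 * m + 1) = g ^ (2 * m + 2))
    (w : Fin s → F)
    (hw : ∀ i, i + 1 < s → ∑ e, w e * (g ^ ((2 * m + 2) * (2 * (e : ℕ)))) ^ i = 0)
    (i j : ℕ) (hi : i < m + s) (hj : j < m + s) :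
    ∑ p : Fin s × Fin (2 * m + 2),
      (w p.1 * (g ^ ((2 * m + 2) * (p.1 : ℕ)))⁻¹ * (-1) ^ (p.2 : ℕ)) *
        (g ^ (2 * (p.1 : ℕ) + 2 * m * (p.2 : ℕ))) ^ (i + (2 * m + 1) * j) = 0 := by
  rcases Nat.eq_zero_or_pos s with hs0 | hs0
  · subst hs0; simp
  have hm : 0 < m := by omega
  set u := g ^ (2 * m) with hu
  have hou : orderOf u = 2 * m + 2 := by
    rw [hu, orderOf_pow_of_dvd (by omega) (by rw [hg]; exact dvd_mul_right _ _), hg,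
      Nat.mul_div_cancel_left _ (by omega)]
  have hum : u ^ (m + 1) = -1 := by
    have h2 : (u ^ (m + 1)) ^ 2 = 1 := by
      rw [← pow_mul, show (m + 1) * 2 = 2 * m + 2 by ring, ← hou, pow_orderOf_eq_one]
    rcases (mul_self_eq_one_iff.1 ((sq _).symm.trans h2)) with h | h
    · exfalso
      have := orderOf_dvd_of_pow_eq_one h
      rw [hou] at this
      have := Nat.le_of_dvd (by omega) this
      omega
    · exact h
  set N := i + (2 * m + 1) * j with hN
  rw [Fintype.sum_prod_type]
  have hsplit : ∀ e : Fin s, ∑ l : Fin (2 * m + 2),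
      (w e * (g ^ ((2 * m + 2) * (e : ℕ)))⁻¹ * (-1) ^ (l : ℕ)) *
        (g ^ (2 * (e : ℕ) + 2 * m * (l : ℕ))) ^ N =
      (w e * (g ^ ((2 * m + 2) * (e : ℕ)))⁻¹ * g ^ (2 * (e : ℕ) * N)) *
        ∑ l ∈ Finset.range (2 * m + 2), (-u ^ N) ^ l := by
    intro e
    rw [← Fin.sum_univ_eq_sum_range (fun l => (-u ^ N) ^ l), Finset.mul_sum]
    refine Finset.sum_congr rfl fun l _ => ?_
    rw [neg_pow, hu]
    ring
  simp only [hsplit]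
  rw [← Finset.sum_mul]
  by_cases hr : -u ^ N = 1
  · have hmod : N ≡ m + 1 [MOD 2 * m + 2] := by
      have hu0 : u ≠ 0 := pow_ne_zero _ hg0
      have hou' : orderOf (Units.mk0 u hu0) = 2 * m + 2 := by
        rw [← orderOf_units, Units.val_mk0, hou]
      rw [← hou', ← pow_eq_pow_iff_modEq]
      ext
      simp only [Units.val_pow_eq_pow_val, Units.val_mk0]
      rw [hum, ← hr, neg_neg]
    have hcase : i = j + (m + 1) ∨ j = i + (m + 1) := by
      have h1 : i + (2 * m + 2) * j ≡ (m + 1) + j [MOD 2 * m + 2] := by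
        have := hmod.add_right j
        rw [hN] at this
        convert this using 1
        ring
      have h2 : i ≡ (m + 1) + j [MOD 2 * m + 2] := by
        have : i + (2 * m + 2) * j ≡ i [MOD 2 * m + 2] := by simp [Nat.ModEq]
        exact this.symm.trans h1
      by_cases hlt : (m + 1) + j < 2 * m + 2
      · left
        have := Nat.ModEq.eq_of_lt_of_lt h2 (by omega) hlt
        omega
      · right
        have h3 : i ≡ (m + 1) + j - (2 * m + 2) [MOD 2 * m + 2] := by
          refine h2.trans ?_
          have : (m + 1) + j = ((m + 1) + j - (2 * m + 2)) + (2 * m + 2) := by omega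
          conv_lhs => rw [this]
          simp [Nat.ModEq]
        have := Nat.ModEq.eq_of_lt_of_lt h3 (by omega) (by omega)
        omega
    have hz : ∑ e : Fin s, w e * (g ^ ((2 * m + 2) * (e : ℕ)))⁻¹ * g ^ (2 * (e : ℕ) * N) = 0 := by
      rcases hcase with h | h
      · rw [← hw j (by omega)]
        refine Finset.sum_congr rfl fun e _ => ?_
        rw [mul_assoc]
        congr 1
        rw [inv_mul_eq_iff_eq_mul₀ (pow_ne_zero _ hg0), hN, h]
        ring
      · rw [← hw i (by omega)]
        refine Finset.sum_congr rfl fun e _ => ?_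
        rw [mul_assoc]
        congr 1
        rw [inv_mul_eq_iff_eq_mul₀ (pow_ne_zero _ hg0), hN, h]
        have : g ^ ((2 * m + 2) * (e : ℕ)) = ((g ^ (2 * m + 2)) ^ (2 * m + 1)) ^ (e : ℕ) := by
          rw [hγ, ← pow_mul]
        rw [this]
        ring
    rw [hz, zero_mul]
  · have : (∑ l ∈ Finset.range (2 * m + 2), (-u ^ N) ^ l) = 0 := by
      have h := geom_sum_mul (-u ^ N) (2 * m + 2)
      have h1 : (-u ^ N) ^ (2 * m + 2) = 1 := by
        rw [Even.neg_pow ⟨m + 1, by ring⟩, ← pow_mul, mul_comm, pow_mul, ← hou,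
          pow_orderOf_eq_one, one_pow]
      rw [h1, sub_self] at h
      exact (mul_eq_zero.1 h).resolve_right (sub_ne_zero.2 hr)
    rw [this, mul_zero]

/-- If `q` is odd and `(q+1)/2 ≤ k ≤ q-1`, then the minimum Hamming distance
of the puncture code `P(C)` of the `[q²+1, k, q²+2-k]_{q²}` Reed-Solomon code `C` is at most
`(q+1)(k - (q-1)/2)`: `P(C)` contains a nonzero codeword of weight `(q+1)(k - (q-1)/2)`. -/
theorem puncture_RS_weight_upper_q_odd
    (q k : ℕ) (hq : IsPrimePow q) (hodd : Odd q) (hk1 : q + 1 ≤ 2 * k) (hk2 : k ≤ q - 1)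
    (F : Type) [Field F] [Fintype F] (hF : Fintype.card F = q ^ 2)
    (a : Fin (q ^ 2) → F) (ha : Function.Bijective a) :
    ∃ lam ∈ puncRS q k a, lam ≠ 0 ∧ wt lam = (q + 1) * (k - (q - 1) / 2) := by
  obtain ⟨Fr, hFr⟩ := exists_frob q hq F hF
  obtain ⟨m, rfl⟩ := hodd
  obtain ⟨s, rfl⟩ : ∃ s, k = m + s := ⟨k - m, by omega⟩
  have hs0 : 0 < s := by omega
  have hsm : s ≤ m := by omega
  obtain ⟨g, hg0, hg⟩ := exists_prim (2 * m + 1) (by omega) F hF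
  replace hg : orderOf g = (2 * m) * (2 * m + 2) := by rw [hg]; rfl
  have hinjpow : ∀ x y, x < (2 * m) * (2 * m + 2) → y < (2 * m) * (2 * m + 2) →
      g ^ x = g ^ y → x = y := by
    intro x y hx hy hxy
    rw [← hg] at hx hy
    exact pow_injOn_Iio_orderOf hx hy hxy
  have hγ : (g ^ (2 * m + 2)) ^ (2 * m + 1) = g ^ (2 * m + 2) := by
    rw [pow_succ, ← pow_mul, mul_comm (2 * m + 2), ← hg, pow_orderOf_eq_one, one_mul]
  have hγ' : ∀ n : ℕ, (g ^ ((2 * m + 2) * n)) ^ (2 * m + 1) = g ^ ((2 * m + 2) * n) := by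
    intro n
    rw [pow_mul, ← pow_mul, mul_comm n, pow_mul, hγ]
  obtain ⟨w, hw0, hwq, hw⟩ := exists_weights F s
    (fun e => g ^ ((2 * m + 2) * (2 * (e : ℕ)))) (by
      intro e e' h
      have hb : ∀ e : Fin s, (2 * m + 2) * (2 * (e : ℕ)) < (2 * m) * (2 * m + 2) := by
        intro e
        have := e.2
        rw [mul_comm]
        exact Nat.mul_lt_mul_of_pos_right (by omega) (by omega)
      have h1 := Nat.eq_of_mul_eq_mul_left (by omega) (hinjpow _ _ (hb e) (hb e') h)
      exact Fin.ext (by omega)) (2 * m + 1) Fr hFr (fun e => hγ' _)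
  let φ : Fin s × Fin (2 * m + 2) → F := fun p => g ^ (2 * (p.1 : ℕ) + 2 * m * (p.2 : ℕ))
  have hφ : Function.Injective φ := by
    rintro ⟨e, l⟩ ⟨e', l'⟩ h
    have hb : ∀ (e : Fin s) (l : Fin (2 * m + 2)),
        2 * (e : ℕ) + 2 * m * (l : ℕ) < (2 * m) * (2 * m + 2) := by
      intro e l
      have h1 := e.2
      have h2 : 2 * m * ((l : ℕ) + 1) ≤ (2 * m) * (2 * m + 2) := Nat.mul_le_mul_left _ l.2
      rw [mul_add] at h2
      omega
    have h1 := hinjpow _ _ (hb e l) (hb e' l') h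
    have he : 2 * (e : ℕ) = 2 * (e' : ℕ) := by
      have := congrArg (· % (2 * m)) h1
      simp only [Nat.add_mul_mod_self_left] at this
      have h1 := e.2
      have h2 := e'.2
      rwa [Nat.mod_eq_of_lt (by omega), Nat.mod_eq_of_lt (by omega)] at this
    have hl : (l : ℕ) = l' := Nat.eq_of_mul_eq_mul_left (show 0 < 2 * m by omega) (by omega)
    exact Prod.ext (Fin.ext (by simpa using he)) (Fin.ext hl)
  let A := Equiv.ofBijective a ha
  let ψ : Fin s × Fin (2 * m + 2) → Fin ((2 * m + 1) ^ 2 + 1) := fun p => (A.symm (φ p)).castSucc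
  have hψ : Function.Injective ψ :=
    (Fin.castSucc_injective _).comp (A.symm.injective.comp hφ)
  have hrs : ∀ (f : F[X]) p, rsWord (2 * m + 1) (m + s) a f (ψ p) = f.eval (φ p) := by
    intro f p
    have : a (A.symm (φ p)) = φ p := A.apply_symm_apply (φ p)
    simp [rsWord, ψ, this]
  let val : Fin s × Fin (2 * m + 2) → F := fun p =>
    w p.1 * (g ^ ((2 * m + 2) * (p.1 : ℕ)))⁻¹ * (-1) ^ (p.2 : ℕ)
  have hval0 : ∀ p, val p ≠ 0 := fun p =>
    mul_ne_zero (mul_ne_zero (hw0 _) (inv_ne_zero (pow_ne_zero _ hg0)))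
      (pow_ne_zero _ (neg_ne_zero.2 one_ne_zero))
  have hvalq : ∀ p, val p ^ (2 * m + 1) = val p := by
    intro p
    simp only [val]
    rw [← hFr, map_mul, map_mul, map_inv₀, map_pow Fr (-1), map_neg, map_one, hFr, hFr, hwq, hγ']
  let lam := Function.extend ψ val 0
  have hlam : ∀ p, lam (ψ p) = val p := fun p => hψ.extend_apply _ _ p
  have hlam' : ∀ i, i ∉ Set.range ψ → lam i = 0 := fun i hi => by
    simp only [lam]
    rw [Function.extend_apply' _ _ _ (by simpa using hi)]
    rfl
  refine ⟨lam, ⟨?_, ?_⟩, ?_, ?_⟩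
  · intro i
    by_cases hi : i ∈ Set.range ψ
    · obtain ⟨p, rfl⟩ := hi
      rw [hlam, hvalq]
    · rw [hlam' i hi, zero_pow (by omega)]
  · intro f h hf hh
    rw [← Fintype.sum_of_injective ψ hψ
      (fun p => val p * f.eval (φ p) * (h.eval (φ p)) ^ (2 * m + 1)) _
      (fun i hi => by rw [hlam' i hi]; simp) (fun p => by rw [hlam, hrs, hrs])]
    have hev : ∀ (f : F[X]), f.degree < ((m + s : ℕ) : WithBot ℕ) → ∀ x : F,
        f.eval x = ∑ i ∈ Finset.range (m + s), f.coeff i * x ^ i := by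
      intro f hf x
      by_cases hf0 : f = 0
      · simp [hf0]
      · exact eval_eq_sum_range' ((natDegree_lt_iff_degree_lt hf0).2 hf) x
    have hterm : ∀ p, val p * f.eval (φ p) * (h.eval (φ p)) ^ (2 * m + 1) =
        ∑ i ∈ Finset.range (m + s), ∑ j ∈ Finset.range (m + s),
          (f.coeff i * h.coeff j ^ (2 * m + 1)) *
            (val p * φ p ^ (i + (2 * m + 1) * j)) := by
      intro p
      rw [hev f hf, hev h hh, ← hFr, map_sum, mul_assoc, Finset.sum_mul_sum, Finset.mul_sum]
      refine Finset.sum_congr rfl fun i _ => ?_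
      rw [Finset.mul_sum]
      refine Finset.sum_congr rfl fun j _ => ?_
      rw [hFr]
      ring
    simp only [hterm]
    rw [Finset.sum_comm]
    refine Finset.sum_eq_zero fun i hi => ?_
    rw [Finset.sum_comm]
    refine Finset.sum_eq_zero fun j hj => ?_
    rw [← Finset.mul_sum]
    have := key_sum F m s hsm g hg0 hg hγ w hw i j (Finset.mem_range.1 hi) (Finset.mem_range.1 hj)
    simp only [val, φ]
    rw [this, mul_zero]
  · intro h0
    have := hlam (⟨0, hs0⟩, ⟨0, by omega⟩)
    rw [h0] at this
    exact hval0 _ this.symm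
  · have hset : {i | lam i ≠ 0} = Set.range ψ := by
      ext i
      constructor
      · intro hi
        by_contra hc
        exact hi (hlam' i hc)
      · rintro ⟨p, rfl⟩
        change lam (ψ p) ≠ 0
        rw [hlam]
        exact hval0 p
    rw [wt, hset, ← Set.image_univ, Set.ncard_image_of_injective _ hψ, Set.ncard_univ,
      Nat.card_eq_fintype_card, Fintype.card_prod, Fintype.card_fin, Fintype.card_fin, mul_comm]
    congr 1
    omega
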